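/- For every integer k ≥ 2 and all reals d, δ > 0 there exists ε'₀ > 0 such that for every ε' ∈ (0, ε'₀] there exist ε > 0 and n₀ ∈ ℕ such that the following holds for every integer n ≥ n₀. Let G be a k-partite k-uniform hypergraph with parts V₁,…,V_k satisfying δn ≤ |V_i| ≤ n/δ for all i ∈ [k]. If G is weakly (ε,d)-half-superregular, then G contains a spanning subhypergraph G' (on the same parts) that is weakly (ε', d²/2)-superregular. -/

import Mathlib

open Finset
open scoped Classical

/-- Number of ordered pairs `(x,y) ∈ A × B` with `{x,y}` an edge of `G`. -/
noncomputable def pairCount {V : Type*} (G : SimpleGraph V) (A B : Finset V) : ℕ :=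
  ((A ×ˢ B).filter (fun p => G.Adj p.1 p.2)).card

/-- Number of neighbours of `v` in `B`. -/
noncomputable def degIn {V : Type*} (G : SimpleGraph V) (v : V) (B : Finset V) : ℕ :=
  (B.filter (fun w => G.Adj v w)).card

/-- Degree of `v` in `G`. -/
noncomputable def degOf {V : Type*} [Fintype V] (G : SimpleGraph V) (v : V) : ℕ :=
  ((univ : Finset V).filter (fun w => G.Adj v w)).card

/-- Number of edges of `G`. -/
noncomputable def edgeCnt {V : Type*} [Fintype V] (G : SimpleGraph V) : ℕ :=
  ((univ : Finset (Sym2 V)).filter (fun e => e ∈ G.edgeSet)).card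

/-- Number of edges of `H` with one endpoint in `A` and the other in `B`. -/
noncomputable def eBetween {W : Type*} [Fintype W] (H : SimpleGraph W) (A B : Finset W) : ℕ :=
  ((univ : Finset (Sym2 W)).filter
    (fun e => e ∈ H.edgeSet ∧ ∃ x ∈ A, ∃ y ∈ B, e = s(x, y))).card

/-- A graph `H` on `h` vertices is `μ`-separable if there is `X ⊆ V(H)` with `|X| ≤ μ h`
such that every connected component of `H - X` has at most `μ h` vertices. -/
def Separable {W : Type*} [Fintype W] (H : SimpleGraph W) (μ : ℝ) : Prop :=
  ∃ X : Finset W, (X.card : ℝ) ≤ μ * (Fintype.card W : ℝ) ∧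
    ∀ K : (SimpleGraph.induce ((↑X : Set W)ᶜ) H).ConnectedComponent,
      (K.supp.ncard : ℝ) ≤ μ * (Fintype.card W : ℝ)

/-- A transversal copy of `H` in the graph collection `G`. -/
def HasTransversal {V C W : Type*} (G : C → SimpleGraph V) (H : SimpleGraph W) : Prop :=
  ∃ (τ : W → V) (σ : Sym2 W → C),
    Function.Injective τ ∧ Set.InjOn σ H.edgeSet ∧
    ∀ x y, H.Adj x y → (G (σ s(x, y))).Adj (τ x) (τ y)

/-- Density of a collection of bipartite graphs. -/
noncomputable def colDensity {V C : Type*} (G : C → SimpleGraph V)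
    (A B : Finset V) (D : Finset C) : ℝ :=
  (∑ c ∈ D, (pairCount (G c) A B : ℝ)) / ((D.card : ℝ) * (A.card : ℝ) * (B.card : ℝ))

/-- `(ε,d)`-regularity of a collection of bipartite graphs with parts `V₁, V₂`
and colour set `D`. -/
def ColReg {V C : Type*} (ε d : ℝ) (G : C → SimpleGraph V)
    (V₁ V₂ : Finset V) (D : Finset C) : Prop :=
  d ≤ colDensity G V₁ V₂ D ∧
  ∀ V₁' ⊆ V₁, ∀ V₂' ⊆ V₂, ∀ D' ⊆ D,
    ε * (V₁.card : ℝ) ≤ (V₁'.card : ℝ) → ε * (V₂.card : ℝ) ≤ (V₂'.card : ℝ) →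
    ε * (D.card : ℝ) ≤ (D'.card : ℝ) →
    |colDensity G V₁' V₂' D' - colDensity G V₁ V₂ D| < ε

/-- `(ε,d)`-superregularity of a collection of bipartite graphs. -/
def ColSuperReg {V C : Type*} (ε d : ℝ) (G : C → SimpleGraph V)
    (V₁ V₂ : Finset V) (D : Finset C) : Prop :=
  ColReg ε d G V₁ V₂ D ∧
  (∀ v ∈ V₁, d * (V₂.card : ℝ) * (D.card : ℝ) ≤ ∑ c ∈ D, (degIn (G c) v V₂ : ℝ)) ∧
  (∀ v ∈ V₂, d * (V₁.card : ℝ) * (D.card : ℝ) ≤ ∑ c ∈ D, (degIn (G c) v V₁ : ℝ)) ∧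
  (∀ c ∈ D, d * (V₁.card : ℝ) * (V₂.card : ℝ) ≤ (pairCount (G c) V₁ V₂ : ℝ))

/-- `(ε,d)`-half-superregularity of a collection of bipartite graphs. -/
def ColHalfSuperReg {V C : Type*} (ε d : ℝ) (G : C → SimpleGraph V)
    (V₁ V₂ : Finset V) (D : Finset C) : Prop :=
  (∀ V₁' ⊆ V₁, ∀ V₂' ⊆ V₂, ∀ D' ⊆ D,
    ε * (V₁.card : ℝ) ≤ (V₁'.card : ℝ) → ε * (V₂.card : ℝ) ≤ (V₂'.card : ℝ) →
    ε * (D.card : ℝ) ≤ (D'.card : ℝ) →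
    d * (D'.card : ℝ) * (V₁'.card : ℝ) * (V₂'.card : ℝ) ≤
      ∑ c ∈ D', (pairCount (G c) V₁' V₂' : ℝ)) ∧
  (∀ v ∈ V₁, d * (V₂.card : ℝ) * (D.card : ℝ) ≤ ∑ c ∈ D, (degIn (G c) v V₂ : ℝ)) ∧
  (∀ v ∈ V₂, d * (V₁.card : ℝ) * (D.card : ℝ) ≤ ∑ c ∈ D, (degIn (G c) v V₁ : ℝ)) ∧
  (∀ c ∈ D, d * (V₁.card : ℝ) * (V₂.card : ℝ) ≤ (pairCount (G c) V₁ V₂ : ℝ))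

/-- `(ε,d)`-half-superregularity of a bipartite graph (given by an adjacency relation)
with parts `V₁, V₂`. -/
def BipHalfSuper {V : Type*} (ε d : ℝ) (A : V → V → Prop) (V₁ V₂ : Finset V) : Prop :=
  (∀ U₁ ⊆ V₁, ∀ U₂ ⊆ V₂,
    ε * (V₁.card : ℝ) ≤ (U₁.card : ℝ) → ε * (V₂.card : ℝ) ≤ (U₂.card : ℝ) →
    d * (U₁.card : ℝ) * (U₂.card : ℝ) ≤
      (((U₁ ×ˢ U₂).filter (fun p => A p.1 p.2)).card : ℝ)) ∧
  (∀ x ∈ V₁, d * (V₂.card : ℝ) ≤ ((V₂.filter (fun y => A x y)).card : ℝ)) ∧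
  (∀ y ∈ V₂, d * (V₁.card : ℝ) ≤ ((V₁.filter (fun x => A x y)).card : ℝ))

/-- Number of ordered triples `(x₁,x₂,x₃) ∈ U₁ × U₂ × U₃` with `{x₁,x₂,x₃}` an edge. -/
noncomputable def tripCount {V : Type*} (E : Set (Finset V)) (U₁ U₂ U₃ : Finset V) : ℕ :=
  ((U₁ ×ˢ U₂ ×ˢ U₃).filter
    (fun p => ({p.1, p.2.1, p.2.2} : Finset V) ∈ E)).card

/-- Density of the triple `(U₁,U₂,U₃)` in a `3`-graph. -/
noncomputable def tripDensity {V : Type*} (E : Set (Finset V)) (U₁ U₂ U₃ : Finset V) : ℝ :=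
  (tripCount E U₁ U₂ U₃ : ℝ) / ((U₁.card : ℝ) * (U₂.card : ℝ) * (U₃.card : ℝ))

/-- Degree of a vertex in a hypergraph: the number of edges containing it. -/
noncomputable def hDeg {V : Type*} [Fintype V] (E : Set (Finset V)) (v : V) : ℕ :=
  ((univ : Finset (Finset V)).filter (fun e => e ∈ E ∧ v ∈ e)).card

/-- Weak `(ε,d)`-regularity of a 3-partite triple in a 3-graph. -/
def TripReg {V : Type*} (ε d : ℝ) (E : Set (Finset V)) (V₁ V₂ V₃ : Finset V) : Prop :=
  d ≤ tripDensity E V₁ V₂ V₃ ∧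
  ∀ U₁ ⊆ V₁, ∀ U₂ ⊆ V₂, ∀ U₃ ⊆ V₃,
    ε * (V₁.card : ℝ) ≤ (U₁.card : ℝ) → ε * (V₂.card : ℝ) ≤ (U₂.card : ℝ) →
    ε * (V₃.card : ℝ) ≤ (U₃.card : ℝ) →
    |tripDensity E U₁ U₂ U₃ - tripDensity E V₁ V₂ V₃| < ε

/-- Weak `(ε,d)`-half-superregularity of a 3-partite triple in a 3-graph. -/
def TripHalfSuper {V : Type*} (ε d : ℝ) (E : Set (Finset V)) (V₁ V₂ V₃ : Finset V) : Prop :=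
  (∀ U₁ ⊆ V₁, ∀ U₂ ⊆ V₂, ∀ U₃ ⊆ V₃,
    ε * (V₁.card : ℝ) ≤ (U₁.card : ℝ) → ε * (V₂.card : ℝ) ≤ (U₂.card : ℝ) →
    ε * (V₃.card : ℝ) ≤ (U₃.card : ℝ) →
    d * (U₁.card : ℝ) * (U₂.card : ℝ) * (U₃.card : ℝ) ≤ (tripCount E U₁ U₂ U₃ : ℝ)) ∧
  (∀ x ∈ V₁, d * (V₂.card : ℝ) * (V₃.card : ℝ) ≤ (tripCount E {x} V₂ V₃ : ℝ)) ∧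
  (∀ y ∈ V₂, d * (V₁.card : ℝ) * (V₃.card : ℝ) ≤ (tripCount E V₁ {y} V₃ : ℝ)) ∧
  (∀ z ∈ V₃, d * (V₁.card : ℝ) * (V₂.card : ℝ) ≤ (tripCount E V₁ V₂ {z} : ℝ))

/-- A copy of the 1-expansion of `H` in a 3-graph with edge set `E`. -/
def HasExpansionCopy {V W : Type*} (E : Set (Finset V)) (H : SimpleGraph W) : Prop :=
  ∃ (ρv : W → V) (ρe : Sym2 W → V),
    Function.Injective ρv ∧ Set.InjOn ρe H.edgeSet ∧
    (∀ x, ∀ e ∈ H.edgeSet, ρv x ≠ ρe e) ∧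
    ∀ x y, H.Adj x y → ({ρv x, ρv y, ρe s(x, y)} : Finset V) ∈ E

/-- Number of edges (as functions picking one vertex per part) inside the sets `U i`. -/
noncomputable def kCount {V : Type*} {k : ℕ} (E : Set (Fin k → V)) (U : Fin k → Finset V) : ℕ :=
  ((Fintype.piFinset U).filter (fun e => e ∈ E)).card

/-- Density of a `k`-tuple in a `k`-partite `k`-graph. -/
noncomputable def kDensity {V : Type*} {k : ℕ} (E : Set (Fin k → V)) (U : Fin k → Finset V) : ℝ :=
  (kCount E U : ℝ) / ∏ i, ((U i).card : ℝ)

/-- Degree of `x` as a vertex of the `i`-th part of a `k`-partite `k`-graph. -/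
noncomputable def kDegAt {V : Type*} [Fintype V] {k : ℕ} (E : Set (Fin k → V))
    (i : Fin k) (x : V) : ℕ :=
  ((univ : Finset (Fin k → V)).filter (fun e => e ∈ E ∧ e i = x)).card

/-- Weak ε-regularity of a `k`-tuple in a `k`-partite `k`-graph. -/
def KTupleReg {V : Type*} {k : ℕ} (ε : ℝ) (E : Set (Fin k → V)) (Wp : Fin k → Finset V) : Prop :=
  ∀ U : Fin k → Finset V, (∀ i, U i ⊆ Wp i) →
    (∀ i, ε * ((Wp i).card : ℝ) ≤ ((U i).card : ℝ)) →
    |kDensity E U - kDensity E Wp| < ε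

/-- Weak `(ε,d)`-regularity of a `k`-partite `k`-graph with parts `P`. -/
def KReg {V : Type*} {k : ℕ} (ε d : ℝ) (E : Set (Fin k → V)) (P : Fin k → Finset V) : Prop :=
  d ≤ kDensity E P ∧
  ∀ U : Fin k → Finset V, (∀ i, U i ⊆ P i) →
    (∀ i, ε * ((P i).card : ℝ) ≤ ((U i).card : ℝ)) →
    |kDensity E U - kDensity E P| < ε

/-- Weak `(ε,d)`-superregularity of a `k`-partite `k`-graph with parts `P`. -/
def KSuper {V : Type*} [Fintype V] {k : ℕ} (ε d : ℝ) (E : Set (Fin k → V))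
    (P : Fin k → Finset V) : Prop :=
  KReg ε d E P ∧
  ∀ i, ∀ x ∈ P i, d * (∏ j, ((P j).card : ℝ)) / ((P i).card : ℝ) ≤ (kDegAt E i x : ℝ)

/-- Weak `(ε,d)`-half-superregularity of a `k`-partite `k`-graph with parts `P`. -/
def KHalfSuper {V : Type*} [Fintype V] {k : ℕ} (ε d : ℝ) (E : Set (Fin k → V))
    (P : Fin k → Finset V) : Prop :=
  (∀ U : Fin k → Finset V, (∀ i, U i ⊆ P i) →
    (∀ i, ε * ((P i).card : ℝ) ≤ ((U i).card : ℝ)) →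
    d ≤ kDensity E U) ∧
  ∀ i, ∀ x ∈ P i, d * (∏ j, ((P j).card : ℝ)) / ((P i).card : ℝ) ≤ (kDegAt E i x : ℝ)

/-- An `R`-template: vertex clusters `Vc`, colour clusters `Cc i j` (one for each
edge `ij` of `R`), and for each colour `c ∈ Cc i j` a bipartite graph `Ge c i j`
with parts `Vc i`, `Vc j`.  The graph `G_c` of the collection is the union of the
`Ge c i j` over the edges `ij` of `R` whose colour cluster contains `c`. -/
structure GTemplate (V C : Type*) (r : ℕ) where
  R : SimpleGraph (Fin r)
  Vc : Fin r → Finset V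
  Cc : Fin r → Fin r → Finset C
  Ge : C → Fin r → Fin r → SimpleGraph V
  Cc_symm : ∀ i j, Cc i j = Cc j i
  Ge_symm : ∀ c i j, Ge c i j = Ge c j i
  Vc_disj : ∀ i j, i ≠ j → Disjoint (Vc i) (Vc j)
  Cc_support : ∀ i j, ¬ R.Adj i j → Cc i j = ∅
  Ge_support : ∀ c i j, c ∉ Cc i j → Ge c i j = ⊥
  Ge_bipartite : ∀ c i j x y, (Ge c i j).Adj x y →
    (x ∈ Vc i ∧ y ∈ Vc j) ∨ (x ∈ Vc j ∧ y ∈ Vc i)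

namespace GTemplate

variable {V C : Type*} {r : ℕ}

/-- The graph `G_c` of the template: the union of the bipartite pieces. -/
noncomputable def Gc (T : GTemplate V C r) (c : C) : SimpleGraph V :=
  ⨆ i, ⨆ j, T.Ge c i j

/-- `T` is an `R`-template with parameters `(m, ε, d, δ)`. -/
def IsParam (T : GTemplate V C r) (m ε d δ : ℝ) : Prop :=
  (∀ j, m ≤ ((T.Vc j).card : ℝ) ∧ ((T.Vc j).card : ℝ) ≤ m / δ) ∧
  (∀ i j, T.R.Adj i j → δ * m ≤ ((T.Cc i j).card : ℝ)) ∧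
  (∀ i j, T.R.Adj i j →
    ColReg ε d (fun c => T.Ge c i j) (T.Vc i) (T.Vc j) (T.Cc i j))

/-- `T` is a super `R`-template with parameters `(m, ε, d, δ)`. -/
def IsSuperParam (T : GTemplate V C r) (m ε d δ : ℝ) : Prop :=
  (∀ j, m ≤ ((T.Vc j).card : ℝ) ∧ ((T.Vc j).card : ℝ) ≤ m / δ) ∧
  (∀ i j, T.R.Adj i j → δ * m ≤ ((T.Cc i j).card : ℝ)) ∧
  (∀ i j, T.R.Adj i j →
    ColSuperReg ε d (fun c => T.Ge c i j) (T.Vc i) (T.Vc j) (T.Cc i j))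

/-- `T` is a half-super `R`-template with parameters `(m, ε, d, δ)`. -/
def IsHalfSuperParam (T : GTemplate V C r) (m ε d δ : ℝ) : Prop :=
  (∀ j, m ≤ ((T.Vc j).card : ℝ) ∧ ((T.Vc j).card : ℝ) ≤ m / δ) ∧
  (∀ i j, T.R.Adj i j → δ * m ≤ ((T.Cc i j).card : ℝ)) ∧
  (∀ i j, T.R.Adj i j →
    ColHalfSuperReg ε d (fun c => T.Ge c i j) (T.Vc i) (T.Vc j) (T.Cc i j))

/-- `T` is a semi-super `R`-template with parameters `(m, ε, d, δ)`. -/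
def IsSemiSuperParam (T : GTemplate V C r) (m ε d δ : ℝ) : Prop :=
  T.IsParam m ε d δ ∧
  ∀ i j, T.R.Adj i j →
    (∀ v ∈ T.Vc i, d * ((T.Vc j).card : ℝ) * ((T.Cc i j).card : ℝ) ≤
      ∑ c ∈ T.Cc i j, (degIn (T.Ge c i j) v (T.Vc j) : ℝ)) ∧
    (∀ v ∈ T.Vc j, d * ((T.Vc i).card : ℝ) * ((T.Cc i j).card : ℝ) ≤
      ∑ c ∈ T.Cc i j, (degIn (T.Ge c i j) v (T.Vc i) : ℝ))

/-- The template is rainbow: the colour clusters are pairwise disjoint. -/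
def Rainbow (T : GTemplate V C r) : Prop :=
  ∀ i j k l, T.R.Adj i j → T.R.Adj k l → s(i, j) ≠ s(k, l) →
    Disjoint (T.Cc i j) (T.Cc k l)

/-- Adjacency in the `l`-thick graph of the template, between clusters `i` and `j`. -/
def ThickAdj (T : GTemplate V C r) (l : ℝ) (i j : Fin r) (x y : V) : Prop :=
  l * ((T.Cc i j).card : ℝ) ≤
    (((T.Cc i j).filter (fun c => (T.Ge c i j).Adj x y)).card : ℝ)

end GTemplate

/-! ## Statement 5 -/

open scoped BigOperators

/-
Partition the product of the parts into boundedly many boxes so that, on the scale of sub-boxes, `E`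
looks like its mean on each box (a weak regularity partition, obtained by an energy decrement). Half
superregularity bounds these means below by `d` on every box with large sides, and the other boxes
cover little, so retaining each edge with probability `d` divided by the mean of its box gives an
expected hypergraph of density `d` on all sub-boxes. There are at most `2 ^ ∑ |V_i|` sub-boxes
against `∏ |V_i|` independent choices, so some outcome is as uniform as the expectation. Uniformity
forces all but few vertices to have almost the right degree, and giving the exceptional vertices all
their edges of `E` back changes few edges.
-/

lemma two_point_exp_le {w y : ℝ} (hw : w ∈ Set.Icc (0 : ℝ) 1) (hy : |y| ≤ 1) :
    w * Real.exp ((1 - w) * y) + (1 - w) * Real.exp (-(w * y)) ≤ Real.exp (y ^ 2) := by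
  obtain ⟨hw₀, hw₁⟩ := hw
  have exp_le {z : ℝ} (hz : |z| ≤ 1) : Real.exp z ≤ 1 + z + z ^ 2 := by
    linarith [le_of_abs_le (Real.abs_exp_sub_one_sub_id_le hz)]
  have hpos : |(1 - w) * y| ≤ 1 := by
    rw [abs_mul, abs_of_nonneg (sub_nonneg.2 hw₁)]
    exact mul_le_one₀ (by linarith) (abs_nonneg y) hy
  have hneg : |-(w * y)| ≤ 1 := by
    rw [abs_neg, abs_mul, abs_of_nonneg hw₀]
    exact mul_le_one₀ hw₁ (abs_nonneg y) hy
  calc w * Real.exp ((1 - w) * y) + (1 - w) * Real.exp (-(w * y))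
      ≤ w * (1 + (1 - w) * y + ((1 - w) * y) ^ 2)
          + (1 - w) * (1 + -(w * y) + (-(w * y)) ^ 2) :=
        add_le_add (mul_le_mul_of_nonneg_left (exp_le hpos) hw₀)
          (mul_le_mul_of_nonneg_left (exp_le hneg) (sub_nonneg.2 hw₁))
    _ = w * (1 - w) * y ^ 2 + 1 := by ring
    _ ≤ y ^ 2 + 1 := by
        gcongr
        exact mul_le_of_le_one_left (sq_nonneg y) (by nlinarith)
    _ ≤ Real.exp (y ^ 2) := Real.add_one_le_exp _

/-- The method of conditional expectations: of the two ways to round `w`, one does not exceed the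
average over both. -/
lemma sum_exp_add_le_or {ι : Type*} {I : Finset ι} {X f : ι → ℝ} {w lam : ℝ}
    (hw : w ∈ Set.Icc (0 : ℝ) 1) (hlam : lam ≤ 1) (hf : ∀ i ∈ I, |f i| ≤ lam) :
    ∑ i ∈ I, Real.exp (X i + (1 - w) * f i) ≤ (∑ i ∈ I, Real.exp (X i)) * Real.exp (lam ^ 2) ∨
      ∑ i ∈ I, Real.exp (X i + -(w * f i)) ≤
        (∑ i ∈ I, Real.exp (X i)) * Real.exp (lam ^ 2) := by
  have two_point (i : ι) (hi : i ∈ I) :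
      w * Real.exp ((1 - w) * f i) + (1 - w) * Real.exp (-(w * f i)) ≤ Real.exp (lam ^ 2) :=
    (two_point_exp_le hw ((hf i hi).trans hlam)).trans
      (Real.exp_le_exp.2 (sq_le_sq' (neg_le_of_abs_le (hf i hi)) (le_of_abs_le (hf i hi))))
  refine min_le_iff.1
    ((Convex.min_le_combo _ _ hw.1 (sub_nonneg.2 hw.2) (add_sub_cancel w 1)).trans ?_)
  calc w • ∑ i ∈ I, Real.exp (X i + (1 - w) * f i) +
        (1 - w) • ∑ i ∈ I, Real.exp (X i + -(w * f i))
      = ∑ i ∈ I, Real.exp (X i) *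
          (w * Real.exp ((1 - w) * f i) + (1 - w) * Real.exp (-(w * f i))) := by
        simp only [smul_eq_mul, Real.exp_add, mul_sum, ← sum_add_distrib]
        exact sum_congr rfl fun i _ => by ring
    _ ≤ ∑ i ∈ I, Real.exp (X i) * Real.exp (lam ^ 2) :=
        sum_le_sum fun i hi => mul_le_mul_of_nonneg_left (two_point i hi) (Real.exp_nonneg _)
    _ = (∑ i ∈ I, Real.exp (X i)) * Real.exp (lam ^ 2) := (sum_mul ..).symm

lemma exists_subset_sum_exp_le {α ι : Type*} {I : Finset ι} {f : ι → α → ℝ} {w : α → ℝ} {lam : ℝ}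
    (hlam : lam ≤ 1) (hf : ∀ i ∈ I, ∀ x, |f i x| ≤ lam) (S : Finset α)
    (hw : ∀ x ∈ S, w x ∈ Set.Icc (0 : ℝ) 1) :
    ∃ T ⊆ S, ∑ i ∈ I, Real.exp (∑ x ∈ T, f i x - ∑ x ∈ S, w x * f i x) ≤
      #I * Real.exp (lam ^ 2 * #S) := by
  induction S using Finset.induction_on with
  | empty => exact ⟨∅, Subset.rfl, by simp⟩
  | insert e S he ih =>
    obtain ⟨T, hTS, hT⟩ := ih fun x hx => hw x (mem_insert_of_mem hx)
    have heT : e ∉ T := fun h => he (hTS h)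
    have bound_step : (∑ i ∈ I, Real.exp (∑ x ∈ T, f i x - ∑ x ∈ S, w x * f i x)) *
        Real.exp (lam ^ 2) ≤ #I * Real.exp (lam ^ 2 * #(insert e S)) := by
      refine (mul_le_mul_of_nonneg_right hT (Real.exp_nonneg _)).trans_eq ?_
      rw [mul_assoc, ← Real.exp_add, card_insert_of_notMem he, Nat.cast_succ, mul_add_one]
    rcases sum_exp_add_le_or (hw e (mem_insert_self e S)) hlam fun i hi => hf i hi e with h | h
    · refine ⟨insert e T, insert_subset_insert e hTS, le_trans (le_of_eq ?_) (h.trans bound_step)⟩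
      refine sum_congr rfl fun i _ => congrArg Real.exp ?_
      rw [sum_insert heT, sum_insert he]
      ring
    · refine ⟨T, hTS.trans (subset_insert e S), le_trans (le_of_eq ?_) (h.trans bound_step)⟩
      refine sum_congr rfl fun i _ => congrArg Real.exp ?_
      rw [sum_insert he]
      ring

lemma exists_subset_discrepancy_le {α : Type*} [DecidableEq α] {𝓐 : Finset (Finset α)}
    {S : Finset α} {w : α → ℝ} {η N : ℝ} (hη : 0 < η) (hη₂ : η ≤ 2)
    (hw : ∀ x ∈ S, w x ∈ Set.Icc (0 : ℝ) 1) (hN : #S ≤ N)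
    (h𝓐 : 2 * #𝓐 < Real.exp (η ^ 2 / 4 * N)) :
    ∃ T ⊆ S, ∀ A ∈ 𝓐, |(#(A ∩ T) : ℝ) - ∑ x ∈ A ∩ S, w x| ≤ η * N := by
  let signs : Finset ℝ := {1, -1}
  let f : Finset α × ℝ → α → ℝ := fun p x => if x ∈ p.1 then p.2 * (η / 2) else 0
  have abs_sign {σ : ℝ} (hσ : σ ∈ signs) : |σ| = 1 := by
    rcases mem_insert.1 hσ with rfl | hσ
    · exact abs_one
    · rw [mem_singleton.1 hσ, abs_neg, abs_one]
  have hf : ∀ p ∈ 𝓐 ×ˢ signs, ∀ x, |f p x| ≤ η / 2 := by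
    intro p hp x
    simp only [f]
    split_ifs
    · rw [abs_mul, abs_sign (mem_product.1 hp).2, one_mul, abs_of_pos (half_pos hη)]
    · exact abs_zero.trans_le (half_pos hη).le
  obtain ⟨T, hTS, hT⟩ := exists_subset_sum_exp_le (by linarith) hf S hw
  have exponent_eq (A : Finset α) (σ : ℝ) : ∑ x ∈ T, f (A, σ) x - ∑ x ∈ S, w x * f (A, σ) x =
      η / 2 * (σ * ((#(A ∩ T) : ℝ) - ∑ x ∈ A ∩ S, w x)) := by
    simp only [f, mul_ite, mul_zero, sum_ite_mem, sum_const, nsmul_eq_mul, ← sum_mul,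
      inter_comm _ A]
    ring
  have sum_lt : (#(𝓐 ×ˢ signs) : ℝ) * Real.exp ((η / 2) ^ 2 * #S) <
      Real.exp (η / 2 * (η * N)) := by
    calc (#(𝓐 ×ˢ signs) : ℝ) * Real.exp ((η / 2) ^ 2 * #S)
        ≤ 2 * #𝓐 * Real.exp (η ^ 2 / 4 * N) := by
          rw [card_product, card_pair (by norm_num), Nat.cast_mul, Nat.cast_ofNat, mul_comm (2 : ℝ),
            show (η / 2) ^ 2 = η ^ 2 / 4 by ring]
          gcongr
      _ < Real.exp (η ^ 2 / 4 * N) * Real.exp (η ^ 2 / 4 * N) :=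
          mul_lt_mul_of_pos_right h𝓐 (Real.exp_pos _)
      _ = Real.exp (η / 2 * (η * N)) := by
          rw [← Real.exp_add]
          ring_nf
  have signed_lt {A : Finset α} (hA : A ∈ 𝓐) {σ : ℝ} (hσ : σ ∈ signs) :
      σ * ((#(A ∩ T) : ℝ) - ∑ x ∈ A ∩ S, w x) < η * N := by
    refine lt_of_mul_lt_mul_left (Real.exp_lt_exp.1 ?_) (half_pos hη).le
    rw [← exponent_eq]
    exact (single_le_sum (f := fun p => Real.exp (∑ x ∈ T, f p x - ∑ x ∈ S, w x * f p x))
      (fun _ _ => Real.exp_nonneg _) (mk_mem_product hA hσ)).trans_lt (hT.trans_lt sum_lt)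
  refine ⟨T, hTS, fun A hA => abs_le.2 ⟨?_, ?_⟩⟩
  · linarith [signed_lt hA (σ := -1) (by simp [signs])]
  · linarith [signed_lt hA (σ := 1) (by simp [signs])]

section FiberMean

variable {α β γ : Type*} [DecidableEq β] [DecidableEq γ]

/-- The conditional expectation of `g` on `Ω` given the label `ℓ`, as a function of the label. -/
noncomputable def fiberMean (Ω : Finset α) (ℓ : α → β) (g : α → ℝ) (a : β) : ℝ :=
  𝔼 x ∈ Ω with ℓ x = a, g x

lemma sum_sq_sub_expect_le (s : Finset α) (g : α → ℝ) (c : ℝ) :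
    ∑ x ∈ s, (g x - 𝔼 y ∈ s, g y) ^ 2 ≤ ∑ x ∈ s, (g x - c) ^ 2 := by
  set m := 𝔼 y ∈ s, g y
  have pythagoras : ∑ x ∈ s, (g x - c) ^ 2 = ∑ x ∈ s, (g x - m) ^ 2 + #s * (m - c) ^ 2 := by
    have deviation_sum : ∑ x ∈ s, (g x - m) = 0 := by
      rw [sum_sub_distrib, sum_const, nsmul_eq_mul, card_mul_expect, sub_self]
    calc ∑ x ∈ s, (g x - c) ^ 2
        = ∑ x ∈ s, ((g x - m) ^ 2 + 2 * (m - c) * (g x - m) + (m - c) ^ 2) :=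
          sum_congr rfl fun x _ => by ring
      _ = ∑ x ∈ s, (g x - m) ^ 2 + #s * (m - c) ^ 2 := by
          rw [sum_add_distrib, sum_add_distrib, ← mul_sum, deviation_sum, sum_const, nsmul_eq_mul,
            mul_zero, add_zero]
  rw [pythagoras]
  exact le_add_of_nonneg_right (by positivity)

lemma sum_sq_sub_fiberMean_le (Ω : Finset α) (ℓ : α → β) (g : α → ℝ) (φ : β → ℝ) :
    ∑ x ∈ Ω, (g x - fiberMean Ω ℓ g (ℓ x)) ^ 2 ≤ ∑ x ∈ Ω, (g x - φ (ℓ x)) ^ 2 := by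
  have fiberwise (ψ : β → ℝ) : ∑ x ∈ Ω, (g x - ψ (ℓ x)) ^ 2 =
      ∑ a ∈ Ω.image ℓ, ∑ x ∈ Ω with ℓ x = a, (g x - ψ a) ^ 2 := by
    rw [← sum_fiberwise_of_maps_to fun x hx => mem_image_of_mem ℓ hx]
    exact sum_congr rfl fun a _ => sum_congr rfl fun x hx => by rw [(mem_filter.1 hx).2]
  rw [fiberwise, fiberwise]
  exact sum_le_sum fun a _ => sum_sq_sub_expect_le _ g (φ a)

lemma sum_sq_sub_fiberMean_le_of_refinement {Ω B : Finset α} {ℓ : α → β} {ℓ' : α → γ} {r : γ → β}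
    {p : γ → Prop} {g : α → ℝ} {s : β → ℝ} {η : ℝ} (hr : ∀ x, r (ℓ' x) = ℓ x)
    (hp : ∀ x, p (ℓ' x) ↔ x ∈ B) (hB : B ⊆ Ω) (hs : ∀ b, |s b| ≤ 1) (hη : 0 ≤ η)
    (h : η * #Ω ≤ ∑ x ∈ B, s (ℓ x) * (g x - fiberMean Ω ℓ g (ℓ x))) :
    ∑ x ∈ Ω, (g x - fiberMean Ω ℓ' g (ℓ' x)) ^ 2 ≤
      ∑ x ∈ Ω, (g x - fiberMean Ω ℓ g (ℓ x)) ^ 2 - η ^ 2 * #Ω := by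
  set D : α → ℝ := fun x => g x - fiberMean Ω ℓ g (ℓ x)
  let φ : γ → ℝ := fun a => fiberMean Ω ℓ g (r a) + if p a then η * s (r a) else 0
  have pointwise (x : α) : (g x - φ (ℓ' x)) ^ 2 ≤
      D x ^ 2 + if x ∈ B then η ^ 2 - 2 * η * (s (ℓ x) * D x) else 0 := by
    simp only [φ, D, hr, hp]
    split_ifs
    · have := mul_le_mul_of_nonneg_left ((sq_le_one_iff_abs_le_one _).2 (hs (ℓ x))) (sq_nonneg η)
      linarith
    · simp only [add_zero, le_refl]
  calc ∑ x ∈ Ω, (g x - fiberMean Ω ℓ' g (ℓ' x)) ^ 2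
      ≤ ∑ x ∈ Ω, (g x - φ (ℓ' x)) ^ 2 := sum_sq_sub_fiberMean_le Ω ℓ' g φ
    _ ≤ ∑ x ∈ Ω, (D x ^ 2 + if x ∈ B then η ^ 2 - 2 * η * (s (ℓ x) * D x) else 0) :=
        sum_le_sum fun x _ => pointwise x
    _ = ∑ x ∈ Ω, D x ^ 2 + (#B * η ^ 2 - 2 * η * ∑ x ∈ B, s (ℓ x) * D x) := by
        rw [sum_add_distrib, sum_ite_mem, inter_eq_right.2 hB, sum_sub_distrib, sum_const,
          nsmul_eq_mul, ← mul_sum]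
    _ ≤ ∑ x ∈ Ω, D x ^ 2 + (#Ω * η ^ 2 - 2 * η * (η * #Ω)) := by gcongr
    _ = ∑ x ∈ Ω, D x ^ 2 - η ^ 2 * #Ω := by ring

end FiberMean

section CutNorm

variable {ι : Type*} [Fintype ι] [DecidableEq ι] {V : ι → Type*} {P U : ∀ i, Finset (V i)}
  {f g : (∀ i, V i) → ℝ} {θ η : ℝ}

/-- The box cut norm of `f` on the product of the `P i`, normalised by the size of the product, is
at most `θ`. The bound on the sums of `f` over sub-boxes is what weak regularity controls. -/
def CutNormLE (P : ∀ i, Finset (V i)) (f : (∀ i, V i) → ℝ) (θ : ℝ) : Prop :=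
  ∀ U ≤ P, |∑ x ∈ Fintype.piFinset U, f x| ≤ θ * #(Fintype.piFinset P)

lemma CutNormLE.add (hf : CutNormLE P f θ) (hg : CutNormLE P g η) :
    CutNormLE P (fun x => f x + g x) (θ + η) := fun U hU => by
  rw [sum_add_distrib, add_mul]
  exact (abs_add_le _ _).trans (add_le_add (hf U hU) (hg U hU))

lemma CutNormLE.of_sum_abs_le (h : ∑ x ∈ Fintype.piFinset P, |f x| ≤ θ * #(Fintype.piFinset P)) :
    CutNormLE P f θ := fun _ hU =>
  (abs_sum_le_sum_abs _ _).trans <|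
    (sum_le_sum_of_subset_of_nonneg (Fintype.piFinset_subset _ _ hU)
      fun _ _ _ => abs_nonneg _).trans h

lemma card_piFinset_le_mul_card_piFinset {ε : ℝ} (hU : U ≤ P) {i : ι} (hi : #(U i) ≤ ε * #(P i)) :
    (#(Fintype.piFinset U) : ℝ) ≤ ε * #(Fintype.piFinset P) := by
  rw [Fintype.card_piFinset, Fintype.card_piFinset, ← mul_prod_erase univ _ (mem_univ i),
    ← mul_prod_erase univ (fun i => #(P i)) (mem_univ i)]
  push_cast
  rw [← mul_assoc]
  exact mul_le_mul hi (prod_le_prod (fun _ _ => Nat.cast_nonneg _) fun j _ =>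
    Nat.cast_le.2 (card_le_card (hU j))) (prod_nonneg fun _ _ => Nat.cast_nonneg _)
    ((Nat.cast_nonneg _).trans hi)

end CutNorm

section ThinningRatio

/-- The proportion of an atom of density `a` to retain so that its density becomes `c`. Atoms of
density below `c` are discarded. -/
noncomputable def thinningRatio (c a : ℝ) : ℝ :=
  if c ≤ a then c / a else 0

lemma thinningRatio_mem_Icc {c : ℝ} (hc : 0 ≤ c) (a : ℝ) : thinningRatio c a ∈ Set.Icc 0 1 := by
  rw [thinningRatio]
  split_ifs with hca
  · exact ⟨div_nonneg hc (hc.trans hca), div_le_one_of_le₀ hca (hc.trans hca)⟩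
  · exact ⟨le_rfl, zero_le_one⟩

lemma abs_thinningRatio_mul_sub_le {c : ℝ} (hc : c ∈ Set.Icc (0 : ℝ) 1) (a : ℝ) :
    |thinningRatio c a * a - c| ≤ if a < c then 1 else 0 := by
  rw [thinningRatio]
  rcases lt_or_ge a c with hac | hca
  · rw [if_neg hac.not_ge, if_pos hac, zero_mul, zero_sub, abs_neg, abs_of_nonneg hc.1]
    exact hc.2
  · rw [if_pos hca, if_neg hca.not_gt,
      div_mul_cancel_of_imp fun h0 => le_antisymm (hca.trans_eq h0) hc.1, sub_self, abs_zero]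

end ThinningRatio

section BoxLabel

variable {ι : Type*} {V : ι → Type*}

/-- The label of a point `x` with respect to a family `𝒰` of boxes: for each coordinate, the boxes
of `𝒰` whose side contains that coordinate. The atoms of the partition induced by a family of boxes
are the sets of points with a common label; recording the sides separately makes each atom a box. -/
noncomputable def boxLabel (𝒰 : Finset (∀ i, Finset (V i))) (x : ∀ i, V i) :
    ι → Finset (∀ i, Finset (V i)) :=
  fun i => {U ∈ 𝒰 | x i ∈ U i}

variable [Fintype ι] [DecidableEq ι] {P : ∀ i, Finset (V i)} {g : (∀ i, V i) → ℝ} {c η : ℝ} {t : ℕ}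

/-- The mean of `g` over the points of the product of the `P i` whose label is `a`. -/
noncomputable def atomMean (P : ∀ i, Finset (V i)) (𝒰 : Finset (∀ i, Finset (V i)))
    (g : (∀ i, V i) → ℝ) (a : ι → Finset (∀ i, Finset (V i))) : ℝ :=
  fiberMean (Fintype.piFinset P) (boxLabel 𝒰) g a

/-- The squared `L²` distance from `g` to the function averaging `g` over each atom of `𝒰`. It is
the potential of the energy-decrement argument producing a regular partition into boxes. -/
noncomputable def boxEnergy (P : ∀ i, Finset (V i)) (𝒰 : Finset (∀ i, Finset (V i)))
    (g : (∀ i, V i) → ℝ) : ℝ :=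
  ∑ x ∈ Fintype.piFinset P, (g x - atomMean P 𝒰 g (boxLabel 𝒰 x)) ^ 2

lemma boxEnergy_insert_le {𝒰 : Finset (∀ i, Finset (V i))} {U : ∀ i, Finset (V i)}
    {s : (ι → Finset (∀ i, Finset (V i))) → ℝ} (hs : ∀ a, |s a| ≤ 1) (hU : U ≤ P) (hη : 0 ≤ η)
    (h : η * #(Fintype.piFinset P) ≤
      ∑ x ∈ Fintype.piFinset U,
        s (boxLabel 𝒰 x) * (g x - atomMean P 𝒰 g (boxLabel 𝒰 x))) :
    boxEnergy P (insert U 𝒰) g ≤ boxEnergy P 𝒰 g - η ^ 2 * #(Fintype.piFinset P) := by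
  have coarsen (x : ∀ i, V i) :
      (fun i => {W ∈ 𝒰 | W ∈ boxLabel (insert U 𝒰) x i}) = boxLabel 𝒰 x := by
    ext i W
    simp +contextual [boxLabel]
  have mem_box (x : ∀ i, V i) :
      (∀ i, U ∈ boxLabel (insert U 𝒰) x i) ↔ x ∈ Fintype.piFinset U := by
    simp [boxLabel]
  exact sum_sq_sub_fiberMean_le_of_refinement (r := fun a i => {W ∈ 𝒰 | W ∈ a i})
    (p := fun a => ∀ i, U ∈ a i) coarsen mem_box (Fintype.piFinset_subset _ _ hU) hs hη h

/-- If every family of at most `t` boxes failed, adding a violating box again and again would make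
the energy negative. -/
lemma exists_regular_boxes (hg : ∀ x, g x ∈ Set.Icc (0 : ℝ) 1)
    (hP : (Fintype.piFinset P).Nonempty) (hη : 0 ≤ η) (ht : 1 < t * η ^ 2) :
    ∃ 𝒰 : Finset (∀ i, Finset (V i)), #𝒰 ≤ t ∧
      ∀ s : (ι → Finset (∀ i, Finset (V i))) → ℝ, (∀ a, |s a| ≤ 1) →
        CutNormLE P (fun x => s (boxLabel 𝒰 x) * (g x - atomMean P 𝒰 g (boxLabel 𝒰 x))) η := by
  by_contra! hirr
  set Ω := Fintype.piFinset P
  have low_energy (r : ℕ) (hr : r ≤ t) :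
      ∃ 𝒰 : Finset (∀ i, Finset (V i)), #𝒰 ≤ r ∧ boxEnergy P 𝒰 g ≤ (1 - r * η ^ 2) * #Ω := by
    induction r with
    | zero =>
      refine ⟨∅, card_empty.le, ?_⟩
      calc boxEnergy P ∅ g ≤ ∑ x ∈ Ω, (g x - 0) ^ 2 := sum_sq_sub_fiberMean_le _ _ g fun _ => 0
        _ ≤ ∑ x ∈ Ω, 1 := sum_le_sum fun x _ => by
            rw [sub_zero]
            exact pow_le_one₀ (hg x).1 (hg x).2
        _ = (1 - (0 : ℕ) * η ^ 2) * #Ω := by simp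
    | succ r ih =>
      obtain ⟨𝒰, hcard, henergy⟩ := ih (Nat.le_of_succ_le hr)
      obtain ⟨s, hs, hcut⟩ := hirr 𝒰 (by omega)
      simp only [CutNormLE, not_forall, not_le] at hcut
      obtain ⟨U, hU, hlt⟩ := hcut
      refine ⟨insert U 𝒰, (card_insert_le U 𝒰).trans (Nat.succ_le_succ hcard), ?_⟩
      have energy_step : boxEnergy P (insert U 𝒰) g ≤ boxEnergy P 𝒰 g - η ^ 2 * #Ω := by
        rcases lt_abs.1 hlt with h | h
        · exact boxEnergy_insert_le hs hU hη h.le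
        · refine boxEnergy_insert_le (s := fun a => -s a) (by simpa using hs) hU hη ?_
          simpa only [neg_mul, sum_neg_distrib] using h.le
      push_cast
      linarith
  obtain ⟨𝒰, -, henergy⟩ := low_energy t le_rfl
  have energy_nonneg : 0 ≤ boxEnergy P 𝒰 g := sum_nonneg fun x _ => sq_nonneg _
  have card_pos : (0 : ℝ) < #Ω := by exact_mod_cast hP.card_pos
  nlinarith

lemma filter_boxLabel_eq (𝒰 : Finset (∀ i, Finset (V i)))
    (a : ι → Finset (∀ i, Finset (V i))) :
    {x ∈ Fintype.piFinset P | boxLabel 𝒰 x = a} =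
      Fintype.piFinset fun i => {v ∈ P i | ({U ∈ 𝒰 | v ∈ U i} : Finset _) = a i} := by
  ext x
  simp only [mem_filter, Fintype.mem_piFinset, boxLabel, funext_iff, forall_and]

lemma boxLabel_mem_piFinset (𝒰 : Finset (∀ i, Finset (V i))) (x : ∀ i, V i) :
    boxLabel 𝒰 x ∈ Fintype.piFinset fun _ => 𝒰.powerset :=
  Fintype.mem_piFinset.2 fun _ => mem_powerset.2 (filter_subset _ _)

lemma card_atom_le_of_atomMean_lt {ε : ℝ} {𝒰 : Finset (∀ i, Finset (V i))}
    {a : ι → Finset (∀ i, Finset (V i))} (hε : 0 ≤ ε)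
    (hgc : ∀ U ≤ P, (∀ i, ε * #(P i) ≤ #(U i)) →
      c * #(Fintype.piFinset U) ≤ ∑ x ∈ Fintype.piFinset U, g x)
    (ha : atomMean P 𝒰 g a < c) :
    (#{x ∈ Fintype.piFinset P | boxLabel 𝒰 x = a} : ℝ) ≤ ε * #(Fintype.piFinset P) := by
  set Q : ∀ i, Finset (V i) := fun i => {v ∈ P i | ({U ∈ 𝒰 | v ∈ U i} : Finset _) = a i}
  have hQP : Q ≤ P := fun i => filter_subset _ _
  have atom_eq : {x ∈ Fintype.piFinset P | boxLabel 𝒰 x = a} = Fintype.piFinset Q :=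
    filter_boxLabel_eq 𝒰 a
  rw [atomMean, fiberMean, atom_eq] at ha
  rw [atom_eq]
  rcases (Fintype.piFinset Q).eq_empty_or_nonempty with hempty | hne
  · rw [hempty, card_empty, Nat.cast_zero]
    positivity
  · have atom_sum_lt : ∑ x ∈ Fintype.piFinset Q, g x < c * #(Fintype.piFinset Q) := by
      rw [← card_mul_expect, mul_comm c]
      exact mul_lt_mul_of_pos_left ha (Nat.cast_pos.2 hne.card_pos)
    obtain ⟨i, hi⟩ : ∃ i, #(Q i) < ε * #(P i) := by
      by_contra! hlarge
      exact (hgc Q hQP hlarge).not_gt atom_sum_lt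
    exact card_piFinset_le_mul_card_piFinset hQP hi.le

lemma card_filter_atomMean_lt_le {ε : ℝ} (hε : 0 ≤ ε)
    (hgc : ∀ U ≤ P, (∀ i, ε * #(P i) ≤ #(U i)) →
      c * #(Fintype.piFinset U) ≤ ∑ x ∈ Fintype.piFinset U, g x)
    (𝒰 : Finset (∀ i, Finset (V i))) :
    (#{x ∈ Fintype.piFinset P | atomMean P 𝒰 g (boxLabel 𝒰 x) < c} : ℝ) ≤
      (2 ^ #𝒰) ^ Fintype.card ι * ε * #(Fintype.piFinset P) := by
  set labels : Finset (ι → Finset (∀ i, Finset (V i))) := Fintype.piFinset fun _ => 𝒰.powerset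
  have card_labels : (#labels : ℝ) = (2 ^ #𝒰) ^ Fintype.card ι := by
    simp [labels]
  rw [card_eq_sum_card_fiberwise (f := boxLabel 𝒰) (t := labels)
    fun x _ => boxLabel_mem_piFinset 𝒰 x, Nat.cast_sum, ← card_labels, mul_assoc, ← nsmul_eq_mul]
  refine sum_le_card_nsmul _ _ _ fun a _ => ?_
  rw [filter_filter]
  by_cases ha : atomMean P 𝒰 g a < c
  · refine le_trans ?_ (card_atom_le_of_atomMean_lt hε hgc ha)
    exact Nat.cast_le.2 (card_le_card (monotone_filter_right _ fun _ _ h => And.right h))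
  · have empty_fiber : {x ∈ Fintype.piFinset P |
        atomMean P 𝒰 g (boxLabel 𝒰 x) < c ∧ boxLabel 𝒰 x = a} = ∅ := by
      refine filter_false_of_mem fun x _ => ?_
      rintro ⟨hx, rfl⟩
      exact ha hx
    rw [empty_fiber, card_empty, Nat.cast_zero]
    positivity

lemma exists_weight_cutNormLE {ε : ℝ} (hg : ∀ x, g x ∈ Set.Icc (0 : ℝ) 1)
    (hP : (Fintype.piFinset P).Nonempty) (hc : c ∈ Set.Icc (0 : ℝ) 1) (hη : 0 ≤ η)
    (ht : 1 < t * η ^ 2) (hε : 0 ≤ ε) (hεη : (2 ^ t) ^ Fintype.card ι * ε ≤ η)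
    (hgc : ∀ U ≤ P, (∀ i, ε * #(P i) ≤ #(U i)) →
      c * #(Fintype.piFinset U) ≤ ∑ x ∈ Fintype.piFinset U, g x) :
    ∃ w : (∀ i, V i) → ℝ, (∀ x, w x ∈ Set.Icc 0 (g x)) ∧
      CutNormLE P (fun x => w x - c) (2 * η) := by
  obtain ⟨𝒰, hcard, hreg⟩ := exists_regular_boxes hg hP hη ht
  let D := atomMean P 𝒰 g
  have hρ (a) := thinningRatio_mem_Icc hc.1 (D a)
  have main_term := hreg (fun a => thinningRatio c (D a)) fun a => by
    rw [abs_of_nonneg (hρ a).1]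
    exact (hρ a).2
  have error_term :
      CutNormLE P (fun x => thinningRatio c (D (boxLabel 𝒰 x)) * D (boxLabel 𝒰 x) - c) η := by
    refine .of_sum_abs_le ?_
    calc ∑ x ∈ Fintype.piFinset P, |thinningRatio c (D (boxLabel 𝒰 x)) * D (boxLabel 𝒰 x) - c|
        ≤ ∑ x ∈ Fintype.piFinset P, if D (boxLabel 𝒰 x) < c then (1 : ℝ) else 0 :=
          sum_le_sum fun x _ => abs_thinningRatio_mul_sub_le hc _
      _ = #{x ∈ Fintype.piFinset P | D (boxLabel 𝒰 x) < c} := sum_boole _ _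
      _ ≤ (2 ^ #𝒰) ^ Fintype.card ι * ε * #(Fintype.piFinset P) :=
          card_filter_atomMean_lt_le hε hgc 𝒰
      _ ≤ (2 ^ t) ^ Fintype.card ι * ε * #(Fintype.piFinset P) := by
          gcongr
          exact one_le_two
      _ ≤ η * #(Fintype.piFinset P) := by gcongr
  refine ⟨fun x => thinningRatio c (D (boxLabel 𝒰 x)) * g x, fun x =>
    ⟨mul_nonneg (hρ _).1 (hg x).1, mul_le_of_le_one_left (hg x).1 (hρ _).2⟩, ?_⟩
  convert main_term.add error_term using 1
  · funext x
    simp only [D]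
    ring
  · ring

end BoxLabel

section Rounding

variable {ι : Type*} [Fintype ι]

lemma mul_one_add_sum_le_mul_prod [Nontrivial ι] {a : ι → ℕ} {m : ℕ} (hm : 0 < m)
    (ha : ∀ i, m ≤ a i) : m * (1 + ∑ i, a i) ≤ (Fintype.card ι + 1) * ∏ i, a i := by
  have mul_le_prod (i : ι) : m * a i ≤ ∏ j, a j := by
    obtain ⟨j, hji⟩ := exists_ne i
    calc m * a i ≤ a j * a i := Nat.mul_le_mul_right _ (ha j)
      _ = ∏ l ∈ {j, i}, a l := (prod_pair hji).symm
      _ ≤ ∏ l, a l := prod_le_prod_of_subset_of_one_le' (subset_univ _)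
          fun l _ _ => hm.trans_le (ha l)
  have le_prod : m ≤ ∏ j, a j := by
    obtain ⟨i⟩ := Nontrivial.to_nonempty (α := ι)
    exact (Nat.le_mul_of_pos_right m (hm.trans_le (ha i))).trans (mul_le_prod i)
  calc m * (1 + ∑ i, a i) = m + ∑ i, m * a i := by rw [mul_add, mul_one, mul_sum]
    _ ≤ ∏ j, a j + ∑ _i : ι, ∏ j, a j := add_le_add le_prod (sum_le_sum fun i _ => mul_le_prod i)
    _ = (Fintype.card ι + 1) * ∏ i, a i := by
        rw [sum_const, card_univ, smul_eq_mul]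
        ring

lemma two_mul_two_pow_sum_lt_exp_prod [Nontrivial ι] {a : ι → ℕ} {m : ℕ} {κ : ℝ} (hκ : 0 < κ)
    (hm : Fintype.card ι + 1 < κ * m) (ha : ∀ i, m ≤ a i) :
    2 * (2 : ℝ) ^ ∑ i, a i < Real.exp (κ * (∏ i, a i : ℕ)) := by
  have m_pos : (0 : ℝ) < m := pos_of_mul_pos_right (lt_trans (by positivity) hm) hκ.le
  have prod_pos : (0 : ℝ) < (∏ i, a i : ℕ) :=
    Nat.cast_pos.2 (Finset.prod_pos fun i _ => (Nat.cast_pos.1 m_pos).trans_le (ha i))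
  have exponent_lt : ((1 + ∑ i, a i : ℕ) : ℝ) < κ * (∏ i, a i : ℕ) := by
    refine lt_of_mul_lt_mul_left ?_ m_pos.le
    calc (m : ℝ) * (1 + ∑ i, a i : ℕ) ≤ (Fintype.card ι + 1) * (∏ i, a i : ℕ) := by
          exact_mod_cast mul_one_add_sum_le_mul_prod (Nat.cast_pos.1 m_pos) ha
      _ < κ * m * (∏ i, a i : ℕ) := mul_lt_mul_of_pos_right hm prod_pos
      _ = m * (κ * (∏ i, a i : ℕ)) := by ring
  calc 2 * (2 : ℝ) ^ ∑ i, a i = 2 ^ (1 + ∑ i, a i) := by rw [pow_add, pow_one]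
    _ ≤ Real.exp 1 ^ (1 + ∑ i, a i) := by
        gcongr
        linarith [Real.add_one_le_exp 1]
    _ = Real.exp (1 + ∑ i, a i : ℕ) := Real.exp_one_pow _
    _ < Real.exp (κ * (∏ i, a i : ℕ)) := Real.exp_lt_exp.2 exponent_lt

variable [DecidableEq ι]

lemma exists_subset_cutNormLE {V : ι → Type*} {P : ∀ i, Finset (V i)} {E : Set (∀ i, V i)}
    {w : (∀ i, V i) → ℝ} {η : ℝ} (hw : ∀ x, w x ∈ Set.Icc 0 (E.indicator 1 x)) (hη : 0 < η)
    (hη₂ : η ≤ 2)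
    (hP : 2 * (2 : ℝ) ^ ∑ i, #(P i) < Real.exp (η ^ 2 / 4 * #(Fintype.piFinset P))) :
    ∃ E₁ ⊆ E, CutNormLE P (fun x => E₁.indicator 1 x - w x) η := by
  set S : Finset (∀ i, V i) := {x ∈ Fintype.piFinset P | x ∈ E}
  set boxes : Finset (Finset (∀ i, V i)) :=
    (Fintype.piFinset fun i => (P i).powerset).image fun U => Fintype.piFinset U
  have card_boxes : #boxes ≤ 2 ^ ∑ i, #(P i) := by
    refine card_image_le.trans_eq ?_
    simp only [Fintype.card_piFinset, card_powerset, prod_pow_eq_pow_sum]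
  have hwS (x : ∀ i, V i) (hx : x ∈ S) : w x ∈ Set.Icc (0 : ℝ) 1 := by
    simpa only [Set.indicator_of_mem (mem_filter.1 hx).2, Pi.one_apply] using hw x
  have few_boxes : 2 * (#boxes : ℝ) < Real.exp (η ^ 2 / 4 * #(Fintype.piFinset P)) :=
    lt_of_le_of_lt (mul_le_mul_of_nonneg_left (by exact_mod_cast card_boxes) zero_le_two) hP
  obtain ⟨T, hTS, hT⟩ := exists_subset_discrepancy_le hη hη₂ hwS
    (Nat.cast_le.2 (card_le_card (filter_subset _ _))) few_boxes
  refine ⟨T, fun x hx => (mem_filter.1 (hTS hx)).2, fun U hU => ?_⟩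
  have hUP := Fintype.piFinset_subset _ _ hU
  have weight_sum : ∑ x ∈ Fintype.piFinset U ∩ S, w x = ∑ x ∈ Fintype.piFinset U, w x := by
    refine sum_subset inter_subset_left fun x hxU hxS => ?_
    have hxE : x ∉ E := fun hxE => hxS (mem_inter.2 ⟨hxU, mem_filter.2 ⟨hUP hxU, hxE⟩⟩)
    have := hw x
    rw [Set.indicator_of_notMem hxE, Set.Icc_self] at this
    exact this
  have edge_sum : ∑ x ∈ Fintype.piFinset U, (T : Set (∀ i, V i)).indicator 1 x =
      (#(Fintype.piFinset U ∩ T) : ℝ) := by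
    simp only [Set.indicator_apply, mem_coe, Pi.one_apply, sum_ite_mem, sum_const, nsmul_eq_mul,
      mul_one]
  rw [sum_sub_distrib, edge_sum, ← weight_sum]
  exact hT _ (mem_image_of_mem _ (Fintype.mem_piFinset.2 fun i => mem_powerset.2 (hU i)))

universe u in
lemma exists_subset_cutNormLE_sub_const [Nontrivial ι] {c θ : ℝ} (hc : 0 ≤ c) (hθ : 0 < θ) :
    ∃ (ε : ℝ) (m : ℕ), 0 < ε ∧ ε ≤ 1 ∧ 0 < m ∧
      ∀ (V : ι → Type u) (P : ∀ i, Finset (V i)) (E : Set (∀ i, V i)), (∀ i, m ≤ #(P i)) →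
        (∀ U ≤ P, (∀ i, ε * #(P i) ≤ #(U i)) →
          c * #(Fintype.piFinset U) ≤ ∑ x ∈ Fintype.piFinset U, E.indicator 1 x) →
        ∃ E₁ ⊆ E, CutNormLE P (fun x => E₁.indicator 1 x - c) θ := by
  obtain ⟨η, hη, hη₂, hηθ⟩ : ∃ η, 0 < η ∧ η ≤ 2 ∧ η + 2 * η ≤ θ :=
    ⟨min 2 (θ / 3), by positivity, min_le_left _ _, by linarith [min_le_right 2 (θ / 3)]⟩
  obtain ⟨t, ht⟩ : ∃ t : ℕ, 1 / η ^ 2 < t := exists_nat_gt _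
  obtain ⟨ε, hε, hε₁, hεη⟩ : ∃ ε : ℝ, 0 < ε ∧ ε ≤ 1 ∧ (2 ^ t) ^ Fintype.card ι * ε ≤ η :=
    ⟨min 1 (η / (2 ^ t) ^ Fintype.card ι), by positivity, min_le_left _ _,
      (le_div_iff₀' (by positivity)).1 (min_le_right _ _)⟩
  obtain ⟨m, hm⟩ : ∃ m : ℕ, (Fintype.card ι + 1) / (η ^ 2 / 4) < m := exists_nat_gt _
  have m_pos : 0 < m := Nat.cast_pos.1 (lt_trans (by positivity) hm)
  refine ⟨ε, m, hε, hε₁, m_pos, fun V P E hP hE => ?_⟩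
  have box_nonempty : (Fintype.piFinset P).Nonempty :=
    Fintype.piFinset_nonempty.2 fun i => card_pos.1 (m_pos.trans_le (hP i))
  have indicator_mem (x : ∀ i, V i) : E.indicator 1 x ∈ Set.Icc (0 : ℝ) 1 :=
    ⟨Set.indicator_nonneg (fun _ _ => zero_le_one) x,
      Set.indicator_le_self' (fun _ _ => zero_le_one) x⟩
  have c_le_one : c ≤ 1 := by
    refine le_of_mul_le_mul_right ?_ (Nat.cast_pos.2 box_nonempty.card_pos : (0 : ℝ) < _)
    calc c * #(Fintype.piFinset P)
        ≤ ∑ x ∈ Fintype.piFinset P, E.indicator 1 x :=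
          hE P le_rfl fun i => mul_le_of_le_one_left (Nat.cast_nonneg _) hε₁
      _ ≤ ∑ x ∈ Fintype.piFinset P, 1 := sum_le_sum fun x _ => (indicator_mem x).2
      _ = 1 * #(Fintype.piFinset P) := by rw [sum_const, nsmul_one, one_mul]
  have exp_large :
      2 * (2 : ℝ) ^ ∑ i, #(P i) < Real.exp (η ^ 2 / 4 * #(Fintype.piFinset P)) := by
    rw [Fintype.card_piFinset]
    exact two_mul_two_pow_sum_lt_exp_prod (by positivity)
      ((div_lt_iff₀' (by positivity)).1 hm) hP
  obtain ⟨w, hw, hwc⟩ := exists_weight_cutNormLE indicator_mem box_nonempty ⟨hc, c_le_one⟩ hη.le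
    ((div_lt_iff₀ (by positivity)).1 ht) hε.le hεη hE
  obtain ⟨E₁, hE₁, hE₁w⟩ := exists_subset_cutNormLE hw hη hη₂ exp_large
  refine ⟨E₁, hE₁, fun U hU => ?_⟩
  have triangle := hE₁w.add hwc U hU
  simp only [sub_add_sub_cancel] at triangle
  exact triangle.trans (mul_le_mul_of_nonneg_right hηθ (Nat.cast_nonneg _))

end Rounding

section DegreeRepair

variable {V : Type*} {k : ℕ} {P U : Fin k → Finset V} {E E₁ : Set (Fin k → V)} {c s β θ : ℝ}

lemma sum_indicator_eq_kCount (E : Set (Fin k → V)) (U : Fin k → Finset V) :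
    ∑ x ∈ Fintype.piFinset U, E.indicator 1 x = (kCount E U : ℝ) := by
  simp only [Set.indicator_apply, Pi.one_apply, sum_boole, kCount]

lemma kDensity_eq_div_card_piFinset (E : Set (Fin k → V)) (U : Fin k → Finset V) :
    kDensity E U = kCount E U / #(Fintype.piFinset U) := by
  rw [kDensity, Fintype.card_piFinset, Nat.cast_prod]

lemma CutNormLE.abs_kCount_sub_le (h : CutNormLE P (fun x => E.indicator 1 x - c) θ) (hU : U ≤ P) :
    |(kCount E U : ℝ) - c * #(Fintype.piFinset U)| ≤ θ * #(Fintype.piFinset P) := by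
  rw [← sum_indicator_eq_kCount, mul_comm c, ← nsmul_eq_mul, ← sum_const, ← sum_sub_distrib]
  exact h U hU

lemma card_piFinset_update {A : Finset V} {i : Fin k} (hA : A ⊆ P i) :
    (#(Fintype.piFinset (Function.update P i A)) : ℝ) = #A * ((∏ j, (#(P j) : ℝ)) / #(P i)) := by
  rcases (P i).eq_empty_or_nonempty with hempty | hne
  · have : A = ∅ := subset_empty.1 (hempty ▸ hA)
    rw [this, Fintype.card_piFinset, prod_eq_zero (mem_univ i) (by simp), card_empty]
    simp
  · have : (#(P i) : ℝ) ≠ 0 := Nat.cast_ne_zero.2 hne.card_ne_zero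
    rw [Fintype.card_piFinset, ← mul_prod_erase univ _ (mem_univ i),
      ← mul_prod_erase univ (fun j => (#(P j) : ℝ)) (mem_univ i), mul_div_cancel_left₀ _ this,
      Function.update_self, Nat.cast_mul, Nat.cast_prod]
    congr 1
    exact prod_congr rfl fun j hj => by rw [Function.update_of_ne (ne_of_mem_erase hj)]

variable [Fintype V]

lemma kCount_update_eq_sum_kDegAt (hE : ∀ e ∈ E, ∀ i, e i ∈ P i) (i : Fin k) (A : Finset V) :
    kCount E (Function.update P i A) = ∑ x ∈ A, kDegAt E i x := by
  have maps_to : ∀ e ∈ {e ∈ Fintype.piFinset (Function.update P i A) | e ∈ E}, e i ∈ A := by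
    intro e he
    simpa only [Function.update_self] using Fintype.mem_piFinset.1 (mem_filter.1 he).1 i
  rw [kCount, card_eq_sum_card_fiberwise maps_to]
  refine sum_congr rfl fun x hx => congrArg card ?_
  ext e
  simp only [mem_filter, Fintype.mem_piFinset, mem_univ, true_and]
  refine ⟨fun h => ⟨h.1.2, h.2⟩, ?_⟩
  rintro ⟨he, rfl⟩
  refine ⟨⟨fun j => ?_, he⟩, rfl⟩
  rcases eq_or_ne j i with rfl | hj
  · rwa [Function.update_self]
  · rw [Function.update_of_ne hj]
    exact hE e he j

lemma kDegAt_mono (h : E₁ ⊆ E) (i : Fin k) (x : V) : kDegAt E₁ i x ≤ kDegAt E i x :=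
  card_le_card (monotone_filter_right _ fun _ _ he => ⟨h he.1, he.2⟩)

/-- The vertices of part `i` whose degree in `E` is less than `s` times the maximum possible. -/
noncomputable def lowDegreeVerts (E : Set (Fin k → V)) (P : Fin k → Finset V) (s : ℝ) (i : Fin k) :
    Finset V :=
  {x ∈ P i | kDegAt E i x < s * (∏ j, (#(P j) : ℝ)) / #(P i)}

/-- The repaired hypergraph: `E₁` together with all edges of `E` through a vertex whose degree in
`E₁` is less than `s` times the maximum possible. -/
def withLowDegreeEdges (E E₁ : Set (Fin k → V)) (P : Fin k → Finset V) (s : ℝ) :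
    Set (Fin k → V) :=
  E₁ ∪ {e ∈ E | ∃ i, e i ∈ lowDegreeVerts E₁ P s i}

lemma card_filter_mem_lowDegreeVerts_le (hE : ∀ e ∈ E, ∀ i, e i ∈ P i)
    (h : CutNormLE P (fun x => E.indicator 1 x - c) θ) (hβ : 0 < β) (i : Fin k) :
    (#{e ∈ Fintype.piFinset P | e i ∈ lowDegreeVerts E P (c - β) i} : ℝ) ≤
      θ / β * #(Fintype.piFinset P) := by
  set A := lowDegreeVerts E P (c - β) i
  set B := Function.update P i A
  have hA : A ⊆ P i := filter_subset _ _
  have hB : B ≤ P := update_le_self_iff.2 hA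
  have degree_sum : (kCount E B : ℝ) ≤ (c - β) * #(Fintype.piFinset B) := by
    rw [kCount_update_eq_sum_kDegAt hE, card_piFinset_update hA, Nat.cast_sum, mul_left_comm,
      ← nsmul_eq_mul, ← mul_div_assoc]
    exact sum_le_card_nsmul _ _ _ fun x hx => (mem_filter.1 hx).2.le
  rw [← Fintype.piFinset_update_eq_filter_piFinset_mem P i hA, div_mul_eq_mul_div, le_div_iff₀ hβ]
  linarith [neg_le_of_abs_le (h.abs_kCount_sub_le hB)]

lemma le_kDegAt_withLowDegreeEdges {i : Fin k} {x : V} (hx : x ∈ P i)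
    (hdeg : s * (∏ j, (#(P j) : ℝ)) / #(P i) ≤ kDegAt E i x) :
    s * (∏ j, (#(P j) : ℝ)) / #(P i) ≤ kDegAt (withLowDegreeEdges E E₁ P s) i x := by
  by_cases hlow : x ∈ lowDegreeVerts E₁ P s i
  · refine hdeg.trans (Nat.cast_le.2 (card_le_card (monotone_filter_right _ ?_)))
    rintro e - ⟨he, rfl⟩
    exact ⟨Or.inr ⟨he, i, hlow⟩, rfl⟩
  · have high : s * (∏ j, (#(P j) : ℝ)) / #(P i) ≤ kDegAt E₁ i x :=
      not_lt.1 fun hlt => hlow (mem_filter.2 ⟨hx, hlt⟩)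
    exact high.trans (Nat.cast_le.2 (kDegAt_mono Set.subset_union_left i x))

lemma CutNormLE.withLowDegreeEdges (hE₁ : ∀ e ∈ E₁, ∀ i, e i ∈ P i) (hβ : 0 < β)
    (h : CutNormLE P (fun x => E₁.indicator 1 x - c) θ) :
    CutNormLE P (fun x => (withLowDegreeEdges E E₁ P (c - β)).indicator 1 x - c)
      (θ + k * (θ / β)) := by
  set E' := _root_.withLowDegreeEdges E E₁ P (c - β)
  have pointwise (x : Fin k → V) : |E'.indicator 1 x - E₁.indicator 1 x| ≤
      ∑ i, if x i ∈ lowDegreeVerts E₁ P (c - β) i then (1 : ℝ) else 0 := by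
    by_cases hx : x ∈ E' ∧ x ∉ E₁
    · obtain ⟨-, i, hi⟩ := hx.1.resolve_left hx.2
      rw [Set.indicator_of_mem hx.1, Set.indicator_of_notMem hx.2, sub_zero, Pi.one_apply, abs_one]
      refine le_trans (if_pos hi).ge (single_le_sum (f := fun i =>
        if x i ∈ lowDegreeVerts E₁ P (c - β) i then (1 : ℝ) else 0) (fun j _ => ?_) (mem_univ i))
      positivity
    · have mem_iff : x ∈ E' ↔ x ∈ E₁ := ⟨fun h => by_contra fun h₁ => hx ⟨h, h₁⟩, Or.inl⟩
      rw [Set.indicator_apply, Set.indicator_apply, if_congr mem_iff rfl rfl, sub_self, abs_zero]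
      positivity
  have added_edges : CutNormLE P (fun x => E'.indicator 1 x - E₁.indicator 1 x) (k * (θ / β)) := by
    refine .of_sum_abs_le ((sum_le_sum fun x _ => pointwise x).trans ?_)
    rw [sum_comm]
    calc ∑ i, ∑ x ∈ Fintype.piFinset P,
          (if x i ∈ lowDegreeVerts E₁ P (c - β) i then (1 : ℝ) else 0)
        ≤ ∑ _i : Fin k, θ / β * #(Fintype.piFinset P) := sum_le_sum fun i _ => by
          rw [sum_boole]
          exact card_filter_mem_lowDegreeVerts_le hE₁ h hβ i
      _ = k * (θ / β) * #(Fintype.piFinset P) := by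
          rw [sum_const, card_univ, Fintype.card_fin, nsmul_eq_mul, mul_assoc]
  convert h.add added_edges using 2
  ring

end DegreeRepair

section Superregularity

variable {V : Type*} {k : ℕ} {P U : Fin k → Finset V} {E : Set (Fin k → V)} {c d d' γ ε : ℝ}

lemma CutNormLE.abs_kDensity_sub_le {q : ℝ} (h : CutNormLE P (fun x => E.indicator 1 x - c) γ)
    (hP : (Fintype.piFinset P).Nonempty) (hU : U ≤ P) (hq : 0 < q)
    (hqU : q * #(Fintype.piFinset P) ≤ #(Fintype.piFinset U)) :
    |kDensity E U - c| ≤ γ / q := by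
  have cardP_pos : (0 : ℝ) < #(Fintype.piFinset P) := Nat.cast_pos.2 hP.card_pos
  have cardU_pos : (0 : ℝ) < #(Fintype.piFinset U) := (mul_pos hq cardP_pos).trans_le hqU
  have γ_nonneg : 0 ≤ γ :=
    nonneg_of_mul_nonneg_left ((abs_nonneg _).trans (h.abs_kCount_sub_le hU)) cardP_pos
  rw [kDensity_eq_div_card_piFinset, div_sub' cardU_pos.ne', abs_div, abs_of_pos cardU_pos,
    div_le_div_iff₀ cardU_pos hq, mul_comm _ c]
  calc |(kCount E U : ℝ) - c * #(Fintype.piFinset U)| * q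
      ≤ γ * #(Fintype.piFinset P) * q :=
        mul_le_mul_of_nonneg_right (h.abs_kCount_sub_le hU) hq.le
    _ = γ * (q * #(Fintype.piFinset P)) := by ring
    _ ≤ γ * #(Fintype.piFinset U) := mul_le_mul_of_nonneg_left hqU γ_nonneg

lemma kReg_of_cutNormLE (h : CutNormLE P (fun x => E.indicator 1 x - c) γ)
    (hP : (Fintype.piFinset P).Nonempty) (hε : 0 < ε) (hγε : γ / ε ^ k + γ < ε) (hd : d ≤ c - γ) :
    KReg ε d E P := by
  have dense_P : |kDensity E P - c| ≤ γ := by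
    simpa only [div_one] using h.abs_kDensity_sub_le hP le_rfl one_pos (one_mul _).le
  refine ⟨by linarith [neg_le_of_abs_le dense_P], fun U hU hlarge => ?_⟩
  have box_large : ε ^ k * #(Fintype.piFinset P) ≤ #(Fintype.piFinset U) := by
    rw [Fintype.card_piFinset, Fintype.card_piFinset, Nat.cast_prod, Nat.cast_prod]
    calc ε ^ k * ∏ i, (#(P i) : ℝ) = ∏ i, ε * (#(P i) : ℝ) := by
          rw [prod_mul_distrib, prod_const, card_univ, Fintype.card_fin]
      _ ≤ ∏ i, (#(U i) : ℝ) := prod_le_prod (fun i _ => by positivity) fun i _ => hlarge i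
  have dense_U := h.abs_kDensity_sub_le hP hU (pow_pos hε k) box_large
  calc |kDensity E U - kDensity E P|
      ≤ |kDensity E U - c| + |kDensity E P - c| := by
        rw [abs_sub_comm (kDensity E P)]
        exact abs_sub_le _ _ _
    _ ≤ γ / ε ^ k + γ := add_le_add dense_U dense_P
    _ < ε := hγε

variable [Fintype V]

lemma KHalfSuper.le_one (h : KHalfSuper ε d E P) (hε : ε ≤ 1) : d ≤ 1 := by
  have dense : d ≤ kDensity E P :=
    h.1 P (fun _ => Subset.rfl) fun i => mul_le_of_le_one_left (Nat.cast_nonneg _) hε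
  refine dense.trans ?_
  rw [kDensity_eq_div_card_piFinset]
  exact div_le_one_of_le₀ (Nat.cast_le.2 (card_le_card (filter_subset _ _))) (Nat.cast_nonneg _)

lemma KHalfSuper.mul_card_le_sum_indicator (h : KHalfSuper ε d E P) (hU : U ≤ P)
    (hlarge : ∀ i, ε * #(P i) ≤ #(U i)) :
    d * #(Fintype.piFinset U) ≤ ∑ x ∈ Fintype.piFinset U, E.indicator 1 x := by
  rw [sum_indicator_eq_kCount]
  refine mul_le_of_le_div₀ (Nat.cast_nonneg _) (Nat.cast_nonneg _) ?_
  rw [← kDensity_eq_div_card_piFinset]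
  exact h.1 U hU hlarge

lemma KHalfSuper.mul_prod_div_le_kDegAt {i : Fin k} {x : V} (h : KHalfSuper ε d E P) (hd : d' ≤ d)
    (hx : x ∈ P i) : d' * (∏ j, (#(P j) : ℝ)) / #(P i) ≤ kDegAt E i x :=
  le_trans (by gcongr) (h.2 i x hx)

lemma KSuper.mono (h : KSuper ε d E P) (hd : d' ≤ d) : KSuper ε d' E P :=
  ⟨⟨hd.trans h.1.1, h.1.2⟩, fun i x hx => le_trans (by gcongr) (h.2 i x hx)⟩

end Superregularity

universe u in
theorem stmt5_general {k : ℕ} (hk : 2 ≤ k) {d d' ε' : ℝ} (hd : 0 < d) (hd' : d' < d)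
    (hε' : 0 < ε') :
    ∃ ε m : ℝ, 0 < ε ∧ ε ≤ 1 ∧
      ∀ (V : Type u) [Fintype V] (P : Fin k → Finset V) (E : Set (Fin k → V)),
        (∀ i, m ≤ #(P i)) → (∀ e ∈ E, ∀ i, e i ∈ P i) → KHalfSuper ε d E P →
        ∃ E' ⊆ E, KSuper ε' d' E' P := by
  have : Nontrivial (Fin k) := Fin.nontrivial_iff_two_le.2 hk
  have hβ : 0 < d - d' := sub_pos.2 hd'
  obtain ⟨θ, hθ, hθ_lt⟩ := exists_pos_mul_lt (lt_min hβ hε')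
    ((1 + k / (d - d')) * (1 / ε' ^ k + 1))
  set γ : ℝ := θ + k * (θ / (d - d')) with γ_def
  have hγ : 0 < γ := by positivity
  have hγ_lt : γ / ε' ^ k + γ < min (d - d') ε' := by
    refine lt_of_eq_of_lt ?_ hθ_lt
    rw [γ_def]
    ring
  obtain ⟨ε, m, hε, hε₁, m_pos, hsparse⟩ :=
    exists_subset_cutNormLE_sub_const (ι := Fin k) hd.le hθ
  refine ⟨ε, m, hε, hε₁, fun V _ P E hP hE hhalf => ?_⟩
  have parts_large (i : Fin k) : m ≤ #(P i) := Nat.cast_le.1 (hP i)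
  obtain ⟨E₁, hE₁, hcut⟩ := hsparse (fun _ => V) P E parts_large fun _ =>
    hhalf.mul_card_le_sum_indicator
  have repaired_cut := hcut.withLowDegreeEdges (E := E) (fun e he => hE e (hE₁ he)) hβ
  rw [sub_sub_cancel] at repaired_cut
  have box_nonempty : (Fintype.piFinset P).Nonempty :=
    Fintype.piFinset_nonempty.2 fun i => card_pos.1 (m_pos.trans_le (parts_large i))
  refine ⟨withLowDegreeEdges E E₁ P d', Set.union_subset hE₁ fun e he => he.1,
    kReg_of_cutNormLE repaired_cut box_nonempty hε' (hγ_lt.trans_le (min_le_right _ _)) ?_, ?_⟩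
  · have : 0 ≤ γ / ε' ^ k := div_nonneg hγ.le (pow_nonneg hε'.le k)
    linarith [hγ_lt.trans_le (min_le_left _ _)]
  · exact fun i x hx => le_kDegAt_withLowDegreeEdges hx (hhalf.mul_prod_div_le_kDegAt hd'.le hx)

theorem stmt5 (k : ℕ) (hk : 2 ≤ k) (d δ : ℝ) (hd : 0 < d) (hδ : 0 < δ) :
    ∃ ε'₀ : ℝ, 0 < ε'₀ ∧ ∀ ε' : ℝ, 0 < ε' → ε' ≤ ε'₀ →
    ∃ (ε : ℝ) (n₀ : ℕ), 0 < ε ∧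
    ∀ n : ℕ, n₀ ≤ n →
    ∀ (V : Type) [Fintype V] (P : Fin k → Finset V) (E : Set (Fin k → V)),
      (∀ i j, i ≠ j → Disjoint (P i) (P j)) →
      (∀ i, δ * (n : ℝ) ≤ ((P i).card : ℝ) ∧ ((P i).card : ℝ) ≤ (n : ℝ) / δ) →
      (∀ e ∈ E, ∀ i, e i ∈ P i) →
      KHalfSuper ε d E P →
      ∃ E' : Set (Fin k → V), E' ⊆ E ∧ KSuper ε' (d ^ 2 / 2) E' P := by
  refine ⟨1, one_pos, fun ε' hε' _ => ?_⟩
  obtain ⟨ε, m, hε, hε₁, hmain⟩ := stmt5_general hk hd (half_lt_self hd) hε'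
  refine ⟨ε, ⌈m / δ⌉₊, hε, fun n hn V _ P E _ hP hE hhalf => ?_⟩
  obtain ⟨E', hE', hsuper⟩ := hmain V P E
    (fun i => ((div_le_iff₀' hδ).1 (Nat.ceil_le.1 hn)).trans (hP i).1) hE hhalf
  exact ⟨E', hE', hsuper.mono (by nlinarith [hhalf.le_one hε₁])⟩
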